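/- The generating function of plane partitions equals the MacMahon product: Σ_{π} q^{|π|} = ∏_{n=1}^{∞} (1 − q^n)^{−n}, where the sum is over all plane partitions π and |π| is the number of boxes of π. -/

import Mathlib

/-- A plane partition: a map `π : ℕ×ℕ → ℕ` with finite support which is weakly decreasing
in both directions. -/
structure PlanePartitionFn where
  part : ℕ → ℕ → ℕ
  decr_left : ∀ i j, part (i + 1) j ≤ part i j
  decr_right : ∀ i j, part i (j + 1) ≤ part i j
  finite_supp : Set.Finite {p : ℕ × ℕ | part p.1 p.2 ≠ 0}

/-- The size `|π| = Σ_{i,j} π_{i,j}` of a plane partition. -/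
noncomputable def PlanePartitionFn.size (π : PlanePartitionFn) : ℕ :=
  π.finite_supp.toFinset.sum fun p => π.part p.1 p.2

/-- The product topology (coefficientwise convergence) on formal power series over `ℚ`:
`PowerSeries ℚ = MvPowerSeries Unit ℚ` is by definition `(Unit →₀ ℕ) → ℚ`. -/
noncomputable instance : TopologicalSpace (PowerSeries ℚ) :=
  inferInstanceAs (TopologicalSpace ((Unit →₀ ℕ) → ℚ))

/-- A growth diagram: an array of interlacing partitions satisfying the local rule. -/
structure IsGD (H : ℕ → ℕ → ℕ → ℕ) : Prop where
  h1 : ∀ s t k, H (s+1) t k ≤ H s t k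
  h2 : ∀ s t k, H s t (k+1) ≤ H (s+1) t k
  h3 : ∀ s t k, H s (t+1) k ≤ H s t k
  h4 : ∀ s t k, H s t (k+1) ≤ H s (t+1) k
  rel : ∀ s t k, H (s+1) (t+1) k + H s t (k+1) =
    min (H (s+1) t k) (H s (t+1) k) + max (H (s+1) t (k+1)) (H s (t+1) (k+1))
  fin : ∃ N, ∀ s t k, N ≤ s ∨ N ≤ t ∨ N ≤ k → H s t k = 0

/-- Downward growth from the two boundary sequences of a plane partition. -/
def gdDown (p : ℕ → ℕ → ℕ) : ℕ → ℕ → ℕ → ℕ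
  | 0, t => fun k => p k (k+t)
  | s+1, 0 => fun k => p (k+(s+1)) k
  | s+1, t+1 => fun k => min (gdDown p (s+1) t k) (gdDown p s (t+1) k) +
      max (gdDown p (s+1) t (k+1)) (gdDown p s (t+1) (k+1)) - gdDown p s t (k+1)
termination_by s t => (s, t)

lemma gdDown_zero (p : ℕ → ℕ → ℕ) (t k : ℕ) : gdDown p 0 t k = p k (k+t) := by
  rw [gdDown]

lemma gdDown_col (p : ℕ → ℕ → ℕ) (s k : ℕ) : gdDown p s 0 k = p (k+s) k := by
  cases s with
  | zero => rw [gdDown]; rfl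
  | succ s => rw [gdDown]

lemma gdDown_succ (p : ℕ → ℕ → ℕ) (s t k : ℕ) : gdDown p (s+1) (t+1) k =
    min (gdDown p (s+1) t k) (gdDown p s (t+1) k) +
      max (gdDown p (s+1) t (k+1)) (gdDown p s (t+1) (k+1)) - gdDown p s t (k+1) := by
  rw [gdDown]

lemma gdDown_interlace (p : ℕ → ℕ → ℕ) (hl : ∀ i j, p (i+1) j ≤ p i j)
    (hr : ∀ i j, p i (j+1) ≤ p i j) (s : ℕ) : ∀ t,
    (∀ k, gdDown p (s+1) t k ≤ gdDown p s t k ∧ gdDown p s t (k+1) ≤ gdDown p (s+1) t k) ∧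
    (∀ k, gdDown p s (t+1) k ≤ gdDown p s t k ∧ gdDown p s t (k+1) ≤ gdDown p s (t+1) k) := by
  have base : ∀ s k, gdDown p (s+1) 0 k ≤ gdDown p s 0 k ∧
      gdDown p s 0 (k+1) ≤ gdDown p (s+1) 0 k := by
    intro s k
    simp only [gdDown_col]
    refine ⟨hl _ _, ?_⟩
    have := hr (k + 1 + s) k
    rwa [show k + (s+1) = k + 1 + s by ring]
  have base' : ∀ t k, gdDown p 0 (t+1) k ≤ gdDown p 0 t k ∧
      gdDown p 0 t (k+1) ≤ gdDown p 0 (t+1) k := by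
    intro t k
    simp only [gdDown_zero]
    refine ⟨hr _ _, ?_⟩
    have := hl k (k + 1 + t)
    rwa [show k + (t+1) = k + 1 + t by ring]
  have step : ∀ s t,
    ((∀ k, gdDown p (s+1) t k ≤ gdDown p s t k ∧ gdDown p s t (k+1) ≤ gdDown p (s+1) t k) ∧
    (∀ k, gdDown p s (t+1) k ≤ gdDown p s t k ∧ gdDown p s t (k+1) ≤ gdDown p s (t+1) k)) →
    (∀ k, gdDown p (s+1) (t+1) k ≤ gdDown p s (t+1) k ∧
      gdDown p s (t+1) (k+1) ≤ gdDown p (s+1) (t+1) k) ∧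
    (∀ k, gdDown p (s+1) (t+1) k ≤ gdDown p (s+1) t k ∧
      gdDown p (s+1) t (k+1) ≤ gdDown p (s+1) (t+1) k) := by
    rintro s t ⟨ha, hb⟩
    constructor <;>
    · intro k
      have a0 := ha k
      have a1 := ha (k+1)
      have b0 := hb k
      have b1 := hb (k+1)
      rw [gdDown_succ]
      omega
  induction s with
  | zero =>
    intro t
    induction t with
    | zero => exact ⟨base 0, base' 0⟩
    | succ t ih => exact ⟨(step 0 t ih).1, base' _⟩
  | succ s ihs =>
    intro t
    induction t with
    | zero => exact ⟨base _, (step s 0 (ihs 0)).2⟩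
    | succ t ih => exact ⟨(step (s+1) t ih).1, (step s (t+1) (ihs _)).2⟩

lemma gdDown_isGD (p : ℕ → ℕ → ℕ) (hl : ∀ i j, p (i+1) j ≤ p i j)
    (hr : ∀ i j, p i (j+1) ≤ p i j) (hf : Set.Finite {x : ℕ × ℕ | p x.1 x.2 ≠ 0}) :
    IsGD (gdDown p) := by
  have I := gdDown_interlace p hl hr
  refine ⟨fun s t k => ((I s t).1 k).1, fun s t k => ((I s t).1 k).2,
    fun s t k => ((I s t).2 k).1, fun s t k => ((I s t).2 k).2, ?_, ?_⟩
  · intro s t k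
    have a0 := (I s t).1 k
    have a1 := (I s t).1 (k+1)
    have b0 := (I s t).2 k
    have b1 := (I s t).2 (k+1)
    rw [gdDown_succ]
    omega
  · obtain ⟨⟨A, B⟩, hAB⟩ := hf.bddAbove
    have hz : ∀ a b, A < a ∨ B < b → p a b = 0 := by
      intro a b h
      by_contra h'
      have := hAB (show (a, b) ∈ _ from h')
      simp only [Prod.mk_le_mk] at this
      omega
    have up1 : ∀ s t k, gdDown p s t k ≤ p k (k+t) := by
      intro s t k
      induction s with
      | zero => rw [gdDown_zero]
      | succ s ih => exact (((I s t).1 k).1).trans ih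
    have up2 : ∀ s t k, gdDown p s t k ≤ p (k+s) k := by
      intro s t k
      induction t with
      | zero => rw [gdDown_col]
      | succ t ih => exact (((I s t).2 k).1).trans ih
    refine ⟨A + B + 1, fun s t k h => ?_⟩
    have u1 := up1 s t k
    have u2 := up2 s t k
    by_cases h1 : A + B + 1 ≤ s
    · rw [hz (k+s) k (by omega)] at u2; omega
    · rw [hz k (k+t) (by omega)] at u1; omega

lemma IsGD.ext_boundary {H H' : ℕ → ℕ → ℕ → ℕ} (h : IsGD H) (h' : IsGD H')
    (e1 : ∀ t k, H 0 t k = H' 0 t k) (e2 : ∀ s k, H s 0 k = H' s 0 k) :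
    ∀ s t k, H s t k = H' s t k := by
  intro s
  induction s with
  | zero => exact e1
  | succ s ihs =>
    intro t
    induction t with
    | zero => exact e2 _
    | succ t ih =>
      intro k
      have r := h.rel s t k
      have r' := h'.rel s t k
      rw [ih, ih, ihs, ihs, ihs] at r
      omega

lemma IsGD.ext_m {H H' : ℕ → ℕ → ℕ → ℕ} (h : IsGD H) (h' : IsGD H') (m : ℕ → ℕ → ℕ)
    (e : ∀ s t, H s t 0 = max (H (s+1) t 0) (H s (t+1) 0) + m s t)
    (e' : ∀ s t, H' s t 0 = max (H' (s+1) t 0) (H' s (t+1) 0) + m s t) :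
    ∀ s t k, H s t k = H' s t k := by
  obtain ⟨N, hN⟩ := h.fin
  obtain ⟨N', hN'⟩ := h'.fin
  have key : ∀ i j s t, s + i = N + N' → t + j = N + N' → ∀ k, H s t k = H' s t k := by
    intro i
    induction i with
    | zero => intro j s t hs ht k; rw [hN, hN'] <;> omega
    | succ i ihi =>
      intro j
      induction j with
      | zero => intro s t hs ht k; rw [hN, hN'] <;> omega
      | succ j ihj =>
        intro s t hs ht k
        have x1 := ihi (j+1) (s+1) t (by omega) ht
        have x2 := ihj s (t+1) hs (by omega)
        have x3 := ihi j (s+1) (t+1) (by omega) (by omega)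
        cases k with
        | zero => rw [e, e', x1, x2]
        | succ k =>
          have r := h.rel s t k
          have r' := h'.rel s t k
          rw [x1, x1, x2, x2, x3] at r
          omega
  intro s t k
  by_cases hs : s ≤ N + N'
  · by_cases ht : t ≤ N + N'
    · exact key (N + N' - s) (N + N' - t) s t (by omega) (by omega) k
    · rw [hN, hN'] <;> omega
  · rw [hN, hN'] <;> omega

/-- Upward growth from a matrix. -/
def gdUp (m : ℕ → ℕ → ℕ) : ℕ → ℕ → ℕ → ℕ
  | 0, _ => fun _ => 0
  | _+1, 0 => fun _ => 0
  | i+1, j+1 => fun k =>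
    match k with
    | 0 => max (gdUp m i (j+1) 0) (gdUp m (i+1) j 0) + m i j
    | k+1 => min (gdUp m i (j+1) k) (gdUp m (i+1) j k) +
      max (gdUp m i (j+1) (k+1)) (gdUp m (i+1) j (k+1)) - gdUp m i j k
termination_by i j => (i, j)

lemma gdUp_z1 (m : ℕ → ℕ → ℕ) (j k : ℕ) : gdUp m 0 j k = 0 := by rw [gdUp]

lemma gdUp_z2 (m : ℕ → ℕ → ℕ) (i k : ℕ) : gdUp m i 0 k = 0 := by
  cases i <;> rw [gdUp]

lemma gdUp_s0 (m : ℕ → ℕ → ℕ) (i j : ℕ) : gdUp m (i+1) (j+1) 0 =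
    max (gdUp m i (j+1) 0) (gdUp m (i+1) j 0) + m i j := by
  rw [gdUp]

lemma gdUp_ss (m : ℕ → ℕ → ℕ) (i j k : ℕ) : gdUp m (i+1) (j+1) (k+1) =
    min (gdUp m i (j+1) k) (gdUp m (i+1) j k) +
      max (gdUp m i (j+1) (k+1)) (gdUp m (i+1) j (k+1)) - gdUp m i j k := by
  rw [gdUp]

lemma gdUp_interlace (m : ℕ → ℕ → ℕ) (s : ℕ) : ∀ t,
    (∀ k, gdUp m s t k ≤ gdUp m (s+1) t k ∧ gdUp m (s+1) t (k+1) ≤ gdUp m s t k) ∧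
    (∀ k, gdUp m s t k ≤ gdUp m s (t+1) k ∧ gdUp m s (t+1) (k+1) ≤ gdUp m s t k) := by
  have base : ∀ s k, gdUp m s 0 k ≤ gdUp m (s+1) 0 k ∧ gdUp m (s+1) 0 (k+1) ≤ gdUp m s 0 k := by
    intro s k
    simp only [gdUp_z2, le_refl, and_self]
  have base' : ∀ t k, gdUp m 0 t k ≤ gdUp m 0 (t+1) k ∧ gdUp m 0 (t+1) (k+1) ≤ gdUp m 0 t k := by
    intro s k
    simp only [gdUp_z1, le_refl, and_self]
  have step : ∀ s t,
    ((∀ k, gdUp m s t k ≤ gdUp m (s+1) t k ∧ gdUp m (s+1) t (k+1) ≤ gdUp m s t k) ∧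
    (∀ k, gdUp m s t k ≤ gdUp m s (t+1) k ∧ gdUp m s (t+1) (k+1) ≤ gdUp m s t k)) →
    (∀ k, gdUp m s (t+1) k ≤ gdUp m (s+1) (t+1) k ∧
      gdUp m (s+1) (t+1) (k+1) ≤ gdUp m s (t+1) k) ∧
    (∀ k, gdUp m (s+1) t k ≤ gdUp m (s+1) (t+1) k ∧
      gdUp m (s+1) (t+1) (k+1) ≤ gdUp m (s+1) t k) := by
    rintro s t ⟨ha, hb⟩
    constructor <;>
    · intro k
      have a0 := ha k
      have b0 := hb k
      have e := gdUp_ss m s t k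
      refine ⟨?_, by omega⟩
      cases k with
      | zero => rw [gdUp_s0]; omega
      | succ k =>
        have a1 := ha k
        have b1 := hb k
        rw [gdUp_ss]
        omega
  induction s with
  | zero =>
    intro t
    induction t with
    | zero => exact ⟨base 0, base' 0⟩
    | succ t ih => exact ⟨(step 0 t ih).1, base' _⟩
  | succ s ihs =>
    intro t
    induction t with
    | zero => exact ⟨base _, (step s 0 (ihs 0)).2⟩
    | succ t ih => exact ⟨(step (s+1) t ih).1, (step s (t+1) (ihs _)).2⟩

lemma exists_gd_of_m (m : ℕ → ℕ → ℕ) (N : ℕ) (hm : ∀ s t, N ≤ s ∨ N ≤ t → m s t = 0) :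
    ∃ H, IsGD H ∧ ∀ s t, H s t 0 = max (H (s+1) t 0) (H s (t+1) 0) + m s t := by
  set u := gdUp (fun i j => m (N - 1 - i) (N - 1 - j)) with hu
  have I := gdUp_interlace (fun i j => m (N - 1 - i) (N - 1 - j))
  rw [← hu] at I
  have z1 : ∀ j k, u 0 j k = 0 := gdUp_z1 _
  have z2 : ∀ j k, u j 0 k = 0 := gdUp_z2 _
  have hz : ∀ s t k, N ≤ s ∨ N ≤ t → u (N - s) (N - t) k = 0 := by
    rintro s t k (h | h)
    · rw [Nat.sub_eq_zero_of_le h, z1]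
    · rw [Nat.sub_eq_zero_of_le h, z2]
  have J : ∀ s t,
    (∀ k, u (N-(s+1)) t k ≤ u (N-s) t k ∧ u (N-s) t (k+1) ≤ u (N-(s+1)) t k) ∧
    (∀ k, u t (N-(s+1)) k ≤ u t (N-s) k ∧ u t (N-s) (k+1) ≤ u t (N-(s+1)) k) := by
    intro s t
    by_cases h : N ≤ s
    · rw [Nat.sub_eq_zero_of_le h, Nat.sub_eq_zero_of_le (show N ≤ s + 1 by omega)]
      simp [z1, z2]
    · obtain ⟨i, hi⟩ : ∃ i, N - s = i + 1 := ⟨N - s - 1, by omega⟩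
      rw [hi, show N - (s+1) = i by omega]
      exact ⟨(I i t).1, (I t i).2⟩
  refine ⟨fun s t k => u (N - s) (N - t) k, ⟨fun s t k => ((J s _).1 k).1,
    fun s t k => ((J s _).1 k).2, fun s t k => ((J t _).2 k).1, fun s t k => ((J t _).2 k).2,
    ?_, N, ?_⟩, ?_⟩
  · intro s t k
    by_cases h : N ≤ s ∨ N ≤ t
    · rw [hz, hz, hz, hz, hz, hz] <;> first | rfl | omega
    · obtain ⟨i, hi⟩ : ∃ i, N - s = i + 1 := ⟨N - s - 1, by omega⟩
      obtain ⟨j, hj⟩ : ∃ j, N - t = j + 1 := ⟨N - t - 1, by omega⟩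
      rw [hi, hj, show N - (s+1) = i by omega, show N - (t+1) = j by omega]
      have e : u (i+1) (j+1) (k+1) = _ := gdUp_ss _ i j k
      rw [← hu] at e
      have := (I i j).1 k
      have := (I i j).2 k
      have := (I i j).1 (k+1)
      have := (I i j).2 (k+1)
      omega
  · have : ∀ k s t, N ≤ s + k → u (N - s) (N - t) k = 0 := by
      intro k
      induction k with
      | zero => intro s t h; exact hz s t 0 (by omega)
      | succ k ih =>
        intro s t h
        have a := ((J s (N-t)).1 k).2
        have b := ih (s+1) t (by omega)
        omega
    intro s t k h
    rcases h with h | h | h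
    · exact hz _ _ _ (Or.inl h)
    · exact hz _ _ _ (Or.inr h)
    · exact this _ _ _ (by omega)
  · intro s t
    by_cases h : N ≤ s ∨ N ≤ t
    · simp only
      rw [hz, hz, hz, hm] <;> first | rfl | omega
    · obtain ⟨i, hi⟩ : ∃ i, N - s = i + 1 := ⟨N - s - 1, by omega⟩
      obtain ⟨j, hj⟩ : ∃ j, N - t = j + 1 := ⟨N - t - 1, by omega⟩
      simp only
      rw [hi, hj, show N - (s+1) = i by omega, show N - (t+1) = j by omega]
      have e : u (i+1) (j+1) 0 = _ := gdUp_s0 _ i j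
      rw [← hu] at e
      rw [e, show N - 1 - i = s by omega, show N - 1 - j = t by omega]

/-- The boundary of `H` is the plane partition `π`. -/
def GDBoundary (π : PlanePartitionFn) (H : ℕ → ℕ → ℕ → ℕ) : Prop :=
  (∀ t k, H 0 t k = π.part k (k+t)) ∧ (∀ s k, H s 0 k = π.part (k+s) k)

lemma exists_gd_of_pp (π : PlanePartitionFn) : ∃ H, IsGD H ∧ GDBoundary π H :=
  ⟨gdDown π.part, gdDown_isGD _ π.decr_left π.decr_right π.finite_supp,
    gdDown_zero _, gdDown_col _⟩

lemma pp_ext {π π' : PlanePartitionFn} (h : ∀ i j, π.part i j = π'.part i j) : π = π' := by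
  cases π
  cases π'
  congr
  funext i j
  exact h i j

lemma GDBoundary.unique {π π' : PlanePartitionFn} {H : ℕ → ℕ → ℕ → ℕ}
    (h : GDBoundary π H) (h' : GDBoundary π' H) : π = π' := by
  apply pp_ext
  intro i j
  rcases le_total i j with hij | hij
  · obtain ⟨t, rfl⟩ := Nat.exists_eq_add_of_le hij
    rw [← h.1, ← h'.1]
  · obtain ⟨t, rfl⟩ := Nat.exists_eq_add_of_le hij
    rw [← h.2, ← h'.2]

lemma IsGD.exists_pp {H : ℕ → ℕ → ℕ → ℕ} (h : IsGD H) : ∃ π, GDBoundary π H := by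
  obtain ⟨N, hN⟩ := h.fin
  set p : ℕ → ℕ → ℕ := fun a b => H (a - b) (b - a) (min a b) with hp
  refine ⟨⟨p, ?_, ?_, ?_⟩, ?_, ?_⟩
  · intro i j
    simp only [hp]
    rcases Nat.lt_or_ge i j with hij | hij
    · rw [show i + 1 - j = i - j by omega, show j - i = (j - (i+1)) + 1 by omega,
        show min (i+1) j = min i j + 1 by omega]
      exact h.h4 _ _ _
    · rw [show i + 1 - j = i - j + 1 by omega, show j - (i+1) = j - i by omega,
        show min (i+1) j = min i j by omega]
      exact h.h1 _ _ _
  · intro i j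
    simp only [hp]
    rcases Nat.lt_or_ge j i with hij | hij
    · rw [show j + 1 - i = j - i by omega, show i - j = (i - (j+1)) + 1 by omega,
        show min i (j+1) = min i j + 1 by omega]
      exact h.h2 _ _ _
    · rw [show j + 1 - i = j - i + 1 by omega, show i - (j+1) = i - j by omega,
        show min i (j+1) = min i j by omega]
      exact h.h3 _ _ _
  · apply (Set.finite_Iic ((N + N, N + N) : ℕ × ℕ)).subset
    rintro ⟨a, b⟩ hab
    by_contra hc
    simp only [Set.mem_Iic, Prod.mk_le_mk] at hc
    exact hab (hN _ _ _ (by omega))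
  · intro t k
    simp only [hp]
    rw [show k - (k+t) = 0 by omega, show k + t - k = t by omega, show min k (k+t) = k by omega]
  · intro t k
    simp only [hp]
    rw [show k - (k+t) = 0 by omega, show k + t - k = t by omega, show min (k+t) k = k by omega]

lemma abel_sum (f : ℕ → ℤ) (n : ℕ) :
    ∑ t ∈ Finset.range n, ((t:ℤ)+1) * (f t - f (t+1)) =
      ∑ t ∈ Finset.range n, f t - n * f n := by
  induction n with
  | zero => simp
  | succ n ih => rw [Finset.sum_range_succ, ih, Finset.sum_range_succ]; push_cast; ring

lemma abel_sum' (f : ℕ → ℤ) (n : ℕ) :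
    ∑ t ∈ Finset.range n, (t:ℤ) * (f t - f (t+1)) =
      ∑ t ∈ Finset.range n, f (t+1) - n * f n := by
  induction n with
  | zero => simp
  | succ n ih => rw [Finset.sum_range_succ, ih, Finset.sum_range_succ]; push_cast; ring

lemma weight_sum (S : ℕ → ℕ → ℤ) (N : ℕ) (hS : ∀ s t, N ≤ s ∨ N ≤ t → S s t = 0) :
    ∑ s ∈ Finset.range N, ∑ t ∈ Finset.range N,
      ((s:ℤ) + t + 1) * ((S s t - S (s+1) t) - (S s (t+1) - S (s+1) (t+1))) =
    ∑ t ∈ Finset.range N, S 0 t + ∑ s ∈ Finset.range N, S (s+1) 0 := by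
  have e : ∀ s t : ℕ, ((s:ℤ) + t + 1) * ((S s t - S (s+1) t) - (S s (t+1) - S (s+1) (t+1))) =
      ((t:ℤ)+1) * ((S s t - S (s+1) t) - (S s (t+1) - S (s+1) (t+1))) +
      (s:ℤ) * ((S s t - S (s+1) t) - (S s (t+1) - S (s+1) (t+1))) := by
    intro s t; ring
  simp only [e, Finset.sum_add_distrib]
  congr 1
  · have := fun s => abel_sum (fun t => S s t - S (s+1) t) N
    simp only [this]
    rw [Finset.sum_sub_distrib, Finset.sum_comm]
    simp only [Finset.sum_range_sub']
    rw [Finset.sum_eq_zero (s := Finset.range N) (f := fun i => (N:ℤ) * _)]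
    · rw [sub_zero]
      apply Finset.sum_congr rfl
      intro t _
      rw [hS N t (by omega), sub_zero]
    · intro s _
      rw [hS s N (by omega), hS (s+1) N (by omega)]; ring
  · simp only [← Finset.mul_sum]
    have : ∀ s, ∑ t ∈ Finset.range N, ((S s t - S (s+1) t) - (S s (t+1) - S (s+1) (t+1))) =
        S s 0 - S (s+1) 0 := by
      intro s
      rw [Finset.sum_range_sub' (fun t => S s t - S (s+1) t), hS s N (by omega),
        hS (s+1) N (by omega)]
      ring
    simp only [this]
    rw [abel_sum' (fun s => S s 0), hS N 0 (by omega)]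
    ring

lemma pp_size_eq {π : PlanePartitionFn} {H : ℕ → ℕ → ℕ → ℕ} (hb : GDBoundary π H) (N : ℕ)
    (hN : ∀ s t k, N ≤ s ∨ N ≤ t ∨ N ≤ k → H s t k = 0) :
    π.size = ∑ t ∈ Finset.range N, ∑ k ∈ Finset.range N, H 0 t k +
      ∑ s ∈ Finset.range N, ∑ k ∈ Finset.range N, H (s+1) 0 k := by
  have z : ∀ a b, π.part a b ≠ 0 → b - a < N ∧ a - b < N ∧ min a b < N := by
    intro a b h
    by_contra hc
    apply h
    rcases le_total a b with hij | hij
    · obtain ⟨t, rfl⟩ := Nat.exists_eq_add_of_le hij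
      rw [← hb.1]
      apply hN
      omega
    · obtain ⟨t, rfl⟩ := Nat.exists_eq_add_of_le hij
      rw [← hb.2]
      apply hN
      omega
  have e1 : π.size = ∑ p ∈ Finset.range (N+N) ×ˢ Finset.range (N+N), π.part p.1 p.2 := by
    unfold PlanePartitionFn.size
    apply Finset.sum_subset
    · rintro ⟨a, b⟩ h
      have := z a b (by simpa using h)
      simp only [Finset.mem_product, Finset.mem_range]
      omega
    · rintro ⟨a, b⟩ _ h
      simpa using h
  rw [e1, ← Finset.sum_product', ← Finset.sum_product']
  have e2 := Finset.sum_disjSum (Finset.range N ×ˢ Finset.range N)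
      (Finset.range N ×ˢ Finset.range N)
      (Sum.elim (fun x : ℕ × ℕ => H 0 x.1 x.2) (fun x : ℕ × ℕ => H (x.1+1) 0 x.2))
  simp only [Sum.elim_inl, Sum.elim_inr] at e2
  rw [← e2]
  symm
  apply Finset.sum_of_injOn
    (Sum.elim (fun x : ℕ × ℕ => (x.2, x.2 + x.1)) (fun x : ℕ × ℕ => (x.2 + (x.1+1), x.2)))
  · rintro (⟨a, b⟩ | ⟨a, b⟩) _ (⟨c, d⟩ | ⟨c, d⟩) _ h <;>
    simp only [Sum.elim_inl, Sum.elim_inr, Prod.mk.injEq] at h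
    · rw [show a = c by omega, show b = d by omega]
    · omega
    · omega
    · rw [show a = c by omega, show b = d by omega]
  · rintro (⟨a, b⟩ | ⟨a, b⟩) h <;>
    · simp at h
      simp
      omega
  · rintro ⟨a, b⟩ _ h
    by_contra h0
    have hz := z a b h0
    apply h
    by_cases hab : a ≤ b
    · refine ⟨Sum.inl (b - a, a), ?_, ?_⟩
      · simp
        omega
      · simp
        omega
    · refine ⟨Sum.inr (a - b - 1, b), ?_, ?_⟩
      · simp
        omega
      · simp
        omega
  · rintro (⟨a, b⟩ | ⟨a, b⟩) _
    · exact hb.1 _ _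
    · exact hb.2 _ _

lemma IsGD.second_diff {H : ℕ → ℕ → ℕ → ℕ} (h : IsGD H) (N : ℕ)
    (hN : ∀ s t k, N ≤ s ∨ N ≤ t ∨ N ≤ k → H s t k = 0) (m : ℕ → ℕ → ℕ)
    (e : ∀ s t, H s t 0 = max (H (s+1) t 0) (H s (t+1) 0) + m s t) (s t : ℕ) :
    ∑ k ∈ Finset.range N, H s t k + ∑ k ∈ Finset.range N, H (s+1) (t+1) k =
    ∑ k ∈ Finset.range N, H (s+1) t k + ∑ k ∈ Finset.range N, H s (t+1) k + m s t := by
  have a1 := Finset.sum_congr (rfl : Finset.range N = _) (fun k _ => h.rel s t k)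
  simp only [Finset.sum_add_distrib] at a1
  have a2 : ∑ k ∈ Finset.range N, H s t k + H s t N = _ :=
    (Finset.sum_range_succ (fun k => H s t k) N).symm.trans (Finset.sum_range_succ' _ N)
  have a3 := (Finset.sum_range_succ (fun k => max (H (s+1) t k) (H s (t+1) k)) N).symm.trans
    (Finset.sum_range_succ' _ N)
  have a4 : ∑ k ∈ Finset.range N, min (H (s+1) t k) (H s (t+1) k) +
      ∑ k ∈ Finset.range N, max (H (s+1) t k) (H s (t+1) k) =
      ∑ k ∈ Finset.range N, H (s+1) t k + ∑ k ∈ Finset.range N, H s (t+1) k := by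
    rw [← Finset.sum_add_distrib, ← Finset.sum_add_distrib]
    exact Finset.sum_congr rfl (fun k _ => min_add_max _ _)
  have a5 := e s t
  rw [hN s t N (by omega)] at a2
  rw [hN (s+1) t N (by omega), hN s (t+1) N (by omega), max_self] at a3
  omega

lemma IsGD.size_eq {π : PlanePartitionFn} {H : ℕ → ℕ → ℕ → ℕ} (h : IsGD H)
    (hb : GDBoundary π H) (m : ℕ → ℕ → ℕ)
    (e : ∀ s t, H s t 0 = max (H (s+1) t 0) (H s (t+1) 0) + m s t)
    (l : ℕ × ℕ →₀ ℕ) (hl : ∀ s t, l (s, t) = (s + t + 1) * m s t) :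
    π.size = l.sum (fun _ x => x) := by
  obtain ⟨N, hN⟩ := h.fin
  have hm : ∀ s t, N ≤ s ∨ N ≤ t → m s t = 0 := by
    intro s t hst
    have := e s t
    rw [hN s t 0 (by omega)] at this
    omega
  have e1 : l.sum (fun _ x => x) =
      ∑ s ∈ Finset.range N, ∑ t ∈ Finset.range N, (s + t + 1) * m s t := by
    rw [← Finset.sum_product', Finsupp.sum_of_support_subset (s := Finset.range N ×ˢ Finset.range N)]
    · exact Finset.sum_congr rfl (fun x _ => hl _ _)
    · rintro ⟨s, t⟩ hst
      by_contra hc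
      simp only [Finset.mem_product, Finset.mem_range] at hc
      rw [Finsupp.mem_support_iff, hl, hm s t (by omega)] at hst
      simp at hst
    · simp
  rw [e1, pp_size_eq hb N hN]
  have W := weight_sum (fun s t => ((∑ k ∈ Finset.range N, H s t k : ℕ) : ℤ)) N (by
    intro s t hst
    rw [Finset.sum_eq_zero]
    · rfl
    · intro k _
      exact hN _ _ _ (by omega))
  zify
  zify at W
  rw [← W]
  refine Finset.sum_congr rfl fun s _ => Finset.sum_congr rfl fun t _ => ?_
  have := h.second_diff N hN m e s t
  zify at this
  congr 1
  linarith

lemma exists_l_of_pp (π : PlanePartitionFn) : ∃ l : ℕ × ℕ →₀ ℕ, ∃ m : ℕ → ℕ → ℕ, ∃ H, IsGD H ∧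
    GDBoundary π H ∧ (∀ s t, H s t 0 = max (H (s+1) t 0) (H s (t+1) 0) + m s t) ∧
    ∀ s t, l (s, t) = (s + t + 1) * m s t := by
  obtain ⟨H, h, hb⟩ := exists_gd_of_pp π
  obtain ⟨N, hN⟩ := h.fin
  have hfin : Set.Finite (Function.support (fun x : ℕ × ℕ => (x.1 + x.2 + 1) *
      (H x.1 x.2 0 - max (H (x.1+1) x.2 0) (H x.1 (x.2+1) 0)))) := by
    apply (Set.finite_Iic ((N, N) : ℕ × ℕ)).subset
    rintro ⟨a, b⟩ hab
    by_contra hc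
    simp only [Set.mem_Iic, Prod.mk_le_mk] at hc
    apply hab
    simp only
    rw [hN a b 0 (by omega)]
    simp
  refine ⟨Finsupp.ofSupportFinite _ hfin,
    fun s t => H s t 0 - max (H (s+1) t 0) (H s (t+1) 0), H, h, hb, ?_, fun s t => rfl⟩
  intro s t
  have := h.h1 s t 0
  have := h.h3 s t 0
  simp only
  omega

/-- The matrix attached to a plane partition, with entries weighted by hook lengths. -/
noncomputable def ppMatrix (π : PlanePartitionFn) : ℕ × ℕ →₀ ℕ := (exists_l_of_pp π).choose

lemma ppMatrix_size (π : PlanePartitionFn) : π.size = (ppMatrix π).sum (fun _ x => x) := by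
  obtain ⟨m, H, h, hb, e, hl⟩ := (exists_l_of_pp π).choose_spec
  exact h.size_eq hb m e _ hl

lemma ppMatrix_dvd (π : PlanePartitionFn) (x : ℕ × ℕ) : (x.1 + x.2 + 1) ∣ ppMatrix π x := by
  obtain ⟨m, H, h, hb, e, hl⟩ := (exists_l_of_pp π).choose_spec
  exact ⟨_, hl x.1 x.2⟩

lemma ppMatrix_unique {π π' : PlanePartitionFn} {m m' : ℕ → ℕ → ℕ} {H H' : ℕ → ℕ → ℕ → ℕ}
    (h : IsGD H) (h' : IsGD H') (hb : GDBoundary π H) (hb' : GDBoundary π' H')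
    (e : ∀ s t, H s t 0 = max (H (s+1) t 0) (H s (t+1) 0) + m s t)
    (e' : ∀ s t, H' s t 0 = max (H' (s+1) t 0) (H' s (t+1) 0) + m' s t)
    (hm : ∀ s t, (s + t + 1) * m s t = (s + t + 1) * m' s t) : π = π' := by
  have hmm : m = m' := by
    funext s t
    exact Nat.eq_of_mul_eq_mul_left (by omega) (hm s t)
  subst hmm
  have hH : H = H' := by
    funext s t k
    exact h.ext_m h' m e e' s t k
  subst hH
  exact hb.unique hb'

lemma ppMatrix_injective : Function.Injective ppMatrix := by
  intro π π' hE
  obtain ⟨m, H, h, hb, e, hl⟩ := (exists_l_of_pp π).choose_spec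
  obtain ⟨m', H', h', hb', e', hl'⟩ := (exists_l_of_pp π').choose_spec
  refine ppMatrix_unique h h' hb hb' e e' (fun s t => ?_)
  rw [← hl, ← hl']
  exact DFunLike.congr_fun hE (s, t)

lemma ppMatrix_surj (l : ℕ × ℕ →₀ ℕ) (hd : ∀ x : ℕ × ℕ, (x.1 + x.2 + 1) ∣ l x) :
    ∃ π, ppMatrix π = l := by
  choose m0 hm0 using hd
  obtain ⟨⟨A, B⟩, hAB⟩ := l.support.bddAbove
  obtain ⟨H, h, e⟩ := exists_gd_of_m (fun s t => m0 (s, t)) (A + B + 1) (by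
    intro s t hst
    by_contra hc
    have : (s, t) ∈ l.support := by
      rw [Finsupp.mem_support_iff, hm0]
      exact Nat.mul_ne_zero (by simp) hc
    have := hAB this
    simp only [Prod.mk_le_mk] at this
    omega)
  obtain ⟨π, hb⟩ := h.exists_pp
  refine ⟨π, ?_⟩
  obtain ⟨m', H', h', hb', e', hl'⟩ := (exists_l_of_pp π).choose_spec
  have hH : H = H' := by
    funext s t k
    exact h.ext_boundary h' (fun t k => (hb.1 t k).trans (hb'.1 t k).symm)
      (fun t k => (hb.2 t k).trans (hb'.2 t k).symm) s t k
  subst hH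
  ext ⟨s, t⟩
  refine (hl' s t).trans ?_
  rw [hm0]
  have a := e s t
  have b := e' s t
  rw [show m' s t = m0 (s, t) by omega]

lemma coeff_one_sub_inv (w d : ℕ) : PowerSeries.coeff d
    ((1 - (PowerSeries.X : PowerSeries ℚ) ^ (w + 1))⁻¹) = if w + 1 ∣ d then 1 else 0 := by
  have : (PowerSeries.mk fun d => if w + 1 ∣ d then (1:ℚ) else 0) =
      (1 - (PowerSeries.X : PowerSeries ℚ) ^ (w + 1))⁻¹ := by
    rw [PowerSeries.eq_inv_iff_mul_eq_one (by simp)]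
    ext n
    rw [mul_sub, mul_one, map_sub, mul_comm, PowerSeries.coeff_X_pow_mul', PowerSeries.coeff_mk,
      PowerSeries.coeff_mk, PowerSeries.coeff_one]
    by_cases hn : w + 1 ≤ n
    · rw [if_pos hn, if_neg (show n ≠ 0 by omega)]
      have : w + 1 ∣ n - (w + 1) ↔ w + 1 ∣ n := by
        rw [Nat.dvd_sub_iff_left hn dvd_rfl]
      simp [this]
    · rw [if_neg hn]
      rcases Nat.eq_zero_or_pos n with rfl | h0
      · simp
      · rw [if_neg (show n ≠ 0 by omega), if_neg (Nat.not_dvd_of_pos_of_lt h0 (by omega))]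
        simp
  rw [← this, PowerSeries.coeff_mk]

lemma pp_card (n : ℕ) (C : Finset (ℕ × ℕ)) (hC : ∀ x : ℕ × ℕ, x.1 + x.2 < n → x ∈ C) :
    Set.Finite {π : PlanePartitionFn | π.size = n} ∧
    PowerSeries.coeff n (∏ x ∈ C, (1 - (PowerSeries.X : PowerSeries ℚ) ^ (x.1 + x.2 + 1))⁻¹) =
      (Set.ncard {π : PlanePartitionFn | π.size = n} : ℚ) := by
  classical
  set T : Finset (ℕ × ℕ →₀ ℕ) := (Finset.finsuppAntidiag C n).filter
    (fun l => ∀ x ∈ C, x.1 + x.2 + 1 ∣ l x) with hT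
  have hI : ppMatrix '' {π : PlanePartitionFn | π.size = n} = (T : Set (ℕ × ℕ →₀ ℕ)) := by
    ext l
    simp only [hT, Set.mem_image, Set.mem_ofPred_eq, Finset.coe_filter,
      Finset.mem_finsuppAntidiag']
    constructor
    · rintro ⟨π, hπ, rfl⟩
      rw [ppMatrix_size] at hπ
      refine ⟨⟨hπ, ?_⟩, fun x _ => ppMatrix_dvd π x⟩
      intro x hx
      apply hC
      have h1 := Nat.le_of_dvd (Nat.pos_of_ne_zero (Finsupp.mem_support_iff.1 hx))
        (ppMatrix_dvd π x)
      have h2 : ppMatrix π x ≤ n := by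
        rw [← hπ]
        exact Finset.single_le_sum (f := fun y => ppMatrix π y) (fun _ _ => Nat.zero_le _) hx
      omega
    · rintro ⟨⟨h1, h2⟩, h3⟩
      obtain ⟨π, rfl⟩ := ppMatrix_surj l (by
        intro x
        by_cases hx : x ∈ C
        · exact h3 x hx
        · rw [Finsupp.notMem_support_iff.1 (fun h => hx (h2 h))]
          exact dvd_zero _)
      exact ⟨π, by rw [ppMatrix_size, h1], rfl⟩
  refine ⟨Set.Finite.of_finite_image (hI ▸ T.finite_toSet) ppMatrix_injective.injOn, ?_⟩
  rw [← Set.ncard_image_of_injective _ ppMatrix_injective, hI, Set.ncard_coe_finset,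
    PowerSeries.coeff_prod]
  simp only [coeff_one_sub_inv, Finset.prod_boole]
  rw [hT, Finset.sum_boole]

/-- The counting series of plane partitions. -/
noncomputable def ppSeries : PowerSeries ℚ :=
  PowerSeries.mk fun n => (Set.ncard {π : PlanePartitionFn | π.size = n} : ℚ)

lemma tendsto_of_coeff {ι : Type*} {F : Filter ι} {f : ι → PowerSeries ℚ} {g : PowerSeries ℚ}
    (h : ∀ n, ∀ᶠ i in F, PowerSeries.coeff n (f i) = PowerSeries.coeff n g) :
    Filter.Tendsto f F (nhds g) := by
  have key : ∀ (f : ι → (Unit →₀ ℕ) → ℚ) (g : (Unit →₀ ℕ) → ℚ),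
      (∀ d, ∀ᶠ i in F, f i d = g d) → Filter.Tendsto f F (nhds g) := by
    intro f g h
    rw [tendsto_pi_nhds]
    intro d
    apply tendsto_nhds_of_eventually_eq
    exact h d
  refine key f g fun d => ?_
  filter_upwards [h (d ())] with i hi
  rw [PowerSeries.coeff_def (s := d) rfl] at hi
  exact hi

lemma hasSum_pp : HasSum (fun π : PlanePartitionFn => (PowerSeries.X : PowerSeries ℚ) ^ π.size)
    ppSeries := by
  classical
  refine tendsto_of_coeff fun n => ?_
  have hf : Set.Finite {π : PlanePartitionFn | π.size = n} :=
    (pp_card n (Finset.range n ×ˢ Finset.range n) (by intro x hx; simp; omega)).1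
  simp only [SummationFilter.unconditional_filter]
  filter_upwards [Filter.eventually_ge_atTop hf.toFinset] with s hs
  rw [map_sum, ppSeries, PowerSeries.coeff_mk, Set.ncard_eq_toFinset_card _ hf]
  simp only [PowerSeries.coeff_X_pow]
  rw [Finset.sum_boole]
  congr 2
  ext π
  simp only [Finset.mem_filter, Set.Finite.mem_toFinset, Set.mem_ofPred_eq]
  constructor
  · exact fun h => h.2.symm
  · exact fun h => ⟨hs (by simpa using h), h.symm⟩

lemma hasProd_pp : HasProd
    (fun n : ℕ => ((1 - (PowerSeries.X : PowerSeries ℚ) ^ (n + 1))⁻¹) ^ (n + 1)) ppSeries := by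
  classical
  refine tendsto_of_coeff fun n => ?_
  simp only [SummationFilter.unconditional_filter]
  filter_upwards [Filter.eventually_ge_atTop (Finset.range n)] with s hs
  rw [ppSeries, PowerSeries.coeff_mk, ← (pp_card n (s.biUnion Finset.HasAntidiagonal.antidiagonal) (by
    intro x hx
    rw [Finset.mem_biUnion]
    exact ⟨x.1 + x.2, hs (by simpa using hx), by simp⟩)).2]
  congr 1
  rw [Finset.prod_biUnion]
  · refine Finset.prod_congr rfl fun k _ => ?_
    rw [Finset.prod_congr rfl (g := fun _ =>
      (1 - (PowerSeries.X : PowerSeries ℚ) ^ (k + 1))⁻¹)]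
    · simp
    · intro x hx
      rw [Finset.HasAntidiagonal.mem_antidiagonal.1 hx]
  · intro a _ b _ hab
    rw [Function.onFun, Finset.disjoint_left]
    intro x hx hx'
    rw [Finset.HasAntidiagonal.mem_antidiagonal] at hx hx'
    omega

/-- MacMahon's formula: the generating function of plane partitions
equals the MacMahon product, `Σ_π q^{|π|} = ∏_{n=1}^∞ (1 − q^n)^{−n}`, as formal power
series in `q` over `ℚ`. -/
theorem macmahon_plane_partition_generating_function :
    (∑' π : PlanePartitionFn, (PowerSeries.X : PowerSeries ℚ) ^ π.size) =
      ∏' n : ℕ, ((1 - (PowerSeries.X : PowerSeries ℚ) ^ (n + 1))⁻¹) ^ (n + 1) := by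
  have : T2Space (PowerSeries ℚ) := inferInstanceAs (T2Space ((Unit →₀ ℕ) → ℚ))
  rw [hasSum_pp.tsum_eq, hasProd_pp.tprod_eq]
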